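/- Let (F_0, a) be initial data for the completion problem in ℂ^d with k ≥ d, let f : [0,∞) → [0,∞) be strictly convex, and let F = (F_0, G) ∈ C_a^op(F_0) be a global minimizer of P_f on C_a(F_0). Suppose that W = range(S_G) ≠ ℂ^d and that S_F restricted to W equals c·I_W for some c > 0. Set λ = λ↑(S_0), μ = λ(S_G) (decreasing), and s = dim W = max{i : μ_i ≠ 0}. Then λ_s < c ≤ λ_{s+1}; consequently λ + μ = (c·1_s, λ_{s+1},…,λ_d) is non-decreasing with λ_i ≤ (λ+μ)_i for every i, and a ≺ μ. -/

import Mathlib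

open Finset
open scoped ComplexOrder

noncomputable def sortAsc {m : ℕ} (x : Fin m → ℝ) : Fin m → ℝ :=
  x ∘ Tuple.sort x

noncomputable def sortDesc {m : ℕ} (x : Fin m → ℝ) : Fin m → ℝ :=
  fun i => (x ∘ Tuple.sort x) i.rev

noncomputable def pad {k : ℕ} (x : Fin k → ℝ) (m : ℕ) : Fin m → ℝ :=
  fun i => if h : (i : ℕ) < k then x ⟨i, h⟩ else 0

/-- `MajorizedBy x y` means `x ≺ y`. -/
def MajorizedBy {m : ℕ} (x y : Fin m → ℝ) : Prop :=
  (∀ j : Fin m, ∑ i ∈ Finset.Iic j, sortDesc x i ≤ ∑ i ∈ Finset.Iic j, sortDesc y i) ∧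
    ∑ i, x i = ∑ i, y i

/-- Majorization of vectors of possibly different lengths, padding with zeros. -/
def MajorizedByPad {k m : ℕ} (x : Fin k → ℝ) (y : Fin m → ℝ) : Prop :=
  MajorizedBy (pad x (max k m)) (pad y (max k m))

/-- The frame operator `S_F = ∑ f_i f_i^*` of a finite sequence of vectors in `ℂ^d`. -/
noncomputable def frameOp {d n : ℕ} (F : Fin n → Fin d → ℂ) : Matrix (Fin d) (Fin d) ℂ :=
  ∑ l, Matrix.vecMulVec (F l) (star (F l))

/-- The squared norm `‖g‖²` of a vector in `ℂ^d`. -/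
noncomputable def normSqVec {d : ℕ} (g : Fin d → ℂ) : ℝ :=
  ∑ i, Complex.normSq (g i)

open scoped Classical in
/-- Eigenvalues of a (Hermitian) matrix arranged in decreasing order. -/
noncomputable def eigsDesc {d : ℕ} (S : Matrix (Fin d) (Fin d) ℂ) : Fin d → ℝ :=
  if h : S.IsHermitian then sortDesc h.eigenvalues else 0

open scoped Classical in
/-- Eigenvalues of a (Hermitian) matrix arranged in increasing order. -/
noncomputable def eigsAsc {d : ℕ} (S : Matrix (Fin d) (Fin d) ℂ) : Fin d → ℝ :=
  if h : S.IsHermitian then sortAsc h.eigenvalues else 0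

/-- `Γ_d(a)`: non-increasing nonnegative vectors in `ℝ^d` majorizing `a`. -/
def Gamma {k : ℕ} (d : ℕ) (a : Fin k → ℝ) : Set (Fin d → ℝ) :=
  {μ | Antitone μ ∧ (∀ i, 0 ≤ μ i) ∧ MajorizedByPad a μ}

/-- The convex potential `P_f = tr f(S) = ∑ f(λ_i(S))`. -/
noncomputable def potential {d : ℕ} (f : ℝ → ℝ) (S : Matrix (Fin d) (Fin d) ℂ) : ℝ :=
  ∑ i, f (eigsDesc S i)

/-- Final averages `Q_{j,r} = (1/(r-j)) (∑_{i=j+1}^k a_i + ∑_{i=j+1}^r λ_i)` (1-based). -/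
noncomputable def finalAvg {d k : ℕ} (lam : Fin d → ℝ) (a : Fin k → ℝ) (j r : ℕ) : ℝ :=
  ((∑ i : Fin k, if j ≤ (i : ℕ) then a i else 0) +
      (∑ i : Fin d, if j ≤ (i : ℕ) ∧ (i : ℕ) < r then lam i else 0)) / ((r : ℝ) - (j : ℝ))

/-- Initial averages: `initAvg lam a lo hi = P_{lo+1,hi}` (1-based), i.e. the average of
`h_i = λ_i + a_i` over the (0-based) index window `[lo, hi)`. -/
noncomputable def initAvg {d k : ℕ} (lam : Fin d → ℝ) (a : Fin k → ℝ) (lo hi : ℕ) : ℝ :=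
  ((∑ i : Fin d, if lo ≤ (i : ℕ) ∧ (i : ℕ) < hi then lam i else 0) +
      (∑ i : Fin k, if lo ≤ (i : ℕ) ∧ (i : ℕ) < hi then a i else 0)) / ((hi : ℝ) - (lo : ℝ))

/-- 1-based access to a vector indexed by `Fin d`. -/
noncomputable def get1 {d : ℕ} (lam : Fin d → ℝ) (i : ℕ) : ℝ :=
  if h : i - 1 < d then lam ⟨i - 1, h⟩ else 0

/-- The index `s` is feasible for the pair `(λ, a)`: the unique vector
`ν_s = (c·1_{r-s}, λ_{r+1},…,λ_d)` determined by the truncated data satisfies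
`a^s ≺ ν_s - λ^s`. -/
def FeasibleIdx {d k : ℕ} (lam : Fin d → ℝ) (a : Fin k → ℝ) (s : ℕ) : Prop :=
  ∃ r : ℕ, ∃ c : ℝ, s < r ∧ r ≤ d ∧ 0 < c ∧
    (∀ i : Fin d, s ≤ (i : ℕ) → (i : ℕ) < r → lam i ≤ c) ∧
    (∀ hrd : r < d, c ≤ lam ⟨r, hrd⟩) ∧
    ((r : ℝ) - (s : ℝ)) * c =
      (∑ i : Fin d, if s ≤ (i : ℕ) ∧ (i : ℕ) < r then lam i else 0) +
        (∑ i : Fin k, if s ≤ (i : ℕ) then a i else 0) ∧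
    MajorizedByPad (fun i : Fin (k - s) => a ⟨s + (i : ℕ), by have := i.isLt; omega⟩)
      (fun i : Fin (d - s) =>
        if s + (i : ℕ) < r then c - lam ⟨s + (i : ℕ), by have := i.isLt; omega⟩ else 0)

open Matrix in
/-- Pairwise commuting Hermitian matrices are simultaneously unitarily diagonalizable. -/
lemma joint_diag {d : ℕ} {ι : Type} [Finite ι] (A : ι → Matrix (Fin d) (Fin d) ℂ)
    (hA : ∀ i, (A i).IsHermitian) (hc : ∀ i j, A i * A j = A j * A i) :
    ∃ U : Matrix (Fin d) (Fin d) ℂ, Uᴴ * U = 1 ∧ U * Uᴴ = 1 ∧ ∃ x : ι → Fin d → ℝ,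
      ∀ i, A i = U * diagonal (fun l => (x i l : ℂ)) * Uᴴ := by
  classical
  set T : ι → EuclideanSpace ℂ (Fin d) →ₗ[ℂ] EuclideanSpace ℂ (Fin d) :=
    fun i => (A i).toEuclideanLin with hTdef
  have hT : ∀ i, (T i).IsSymmetric := fun i => isSymmetric_toEuclideanLin_iff.mpr (hA i)
  have hC : Pairwise (Function.onFun Commute T) := by
    intro i j _
    change T i * T j = T j * T i
    ext1 v
    simp only [hTdef, Module.End.mul_apply, toEuclideanLin, toLpLin_apply, mulVec_mulVec, hc i j]
  have hI := LinearMap.IsSymmetric.directSum_isInternal_of_pairwise_commute hT hC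
  have hO := LinearMap.IsSymmetric.orthogonalFamily_iInf_eigenspaces hT
  have hfin : Finite {α : ι → ℂ // (⨅ j, Module.End.eigenspace (T j) (α j)) ≠ ⊥} :=
    WellFoundedGT.finite_ne_bot_of_iSupIndep hI.submodule_iSupIndep
  have := Fintype.ofFinite {α : ι → ℂ // (⨅ j, Module.End.eigenspace (T j) (α j)) ≠ ⊥}
  have hI' := DirectSum.isInternal_ne_bot_iff.mpr hI
  have hO' := hO.comp (Subtype.val_injective
    (p := fun α : ι → ℂ => (⨅ j, Module.End.eigenspace (T j) (α j)) ≠ ⊥))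
  have hn : Module.finrank ℂ (EuclideanSpace ℂ (Fin d)) = d := finrank_euclideanSpace_fin
  set b := hI'.subordinateOrthonormalBasis hn hO' with hb
  set α : Fin d → ι → ℂ := fun l => (hI'.subordinateOrthonormalBasisIndex hn l hO').1 with hα
  have hmem : ∀ l i, T i (b l) = α l i • b l := by
    intro l i
    have h1 := hI'.subordinateOrthonormalBasis_subordinate hn l hO'
    have h2 := (Submodule.mem_iInf _).1 h1 i
    exact Module.End.mem_eigenspace_iff.1 h2
  set U : Matrix (Fin d) (Fin d) ℂ := Matrix.of (fun r l => b l r) with hU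
  have hUU : Uᴴ * U = 1 := by
    ext l m
    have := orthonormal_iff_ite.1 b.orthonormal l m
    rw [PiLp.inner_apply] at this
    simp only [mul_apply, conjTranspose_apply, hU, of_apply, one_apply]
    rw [← this]
    refine Finset.sum_congr rfl fun r _ => ?_
    simp [mul_comm]
  have hUU' : U * Uᴴ = 1 := mul_eq_one_comm.mp hUU
  have hAU : ∀ i, A i * U = U * diagonal (fun l => α l i) := by
    intro i
    ext r l
    have := congrArg (fun v => v r) (hmem l i)
    simp only [hTdef, toEuclideanLin, toLpLin_apply, PiLp.smul_apply] at this
    rw [mul_diagonal]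
    simpa [mul_apply, hU, mulVec, dotProduct, mul_comm] using this
  refine ⟨U, hUU, hUU', fun i l => (α l i).re, fun i => ?_⟩
  have hre : ∀ l, ((α l i).re : ℂ) = α l i := by
    have h1 : diagonal (fun l => α l i) = Uᴴ * A i * U := by
      rw [mul_assoc, hAU, ← mul_assoc, hUU, one_mul]
    have h2 : (diagonal (fun l => α l i)).IsHermitian := by
      rw [h1]; exact isHermitian_conjTranspose_mul_mul U (hA i)
    intro l
    have := h2.apply l l
    simp only [diagonal_apply_eq] at this
    exact Complex.conj_eq_iff_re.1 this
  simp only [hre]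
  rw [← hAU, mul_assoc, hUU', mul_one]

open Matrix in
lemma herm_of_diag {d : ℕ} {S U : Matrix (Fin d) (Fin d) ℂ} {x : Fin d → ℝ}
    (hS : S = U * diagonal (fun l => (x l : ℂ)) * Uᴴ) : S.IsHermitian := by
  rw [hS]
  apply isHermitian_mul_mul_conjTranspose
  rw [IsHermitian, diagonal_conjTranspose]
  congr 1
  ext l
  simp

open Matrix in
lemma eig_perm {d : ℕ} {S U : Matrix (Fin d) (Fin d) ℂ} {x : Fin d → ℝ} (hU : Uᴴ * U = 1)
    (hS : S = U * diagonal (fun l => (x l : ℂ)) * Uᴴ) (h : S.IsHermitian) :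
    sortAsc h.eigenvalues = sortAsc x := by
  have h1 := h.roots_charpoly_eq_eigenvalues
  have h2 : S.charpoly = ∏ i, (Polynomial.X - Polynomial.C (x i : ℂ)) := by
    rw [hS, charpoly_mul_comm, ← mul_assoc, hU, one_mul, charpoly_diagonal]
  have h3 : S.charpoly.roots = Multiset.map (fun i => (x i : ℂ)) Finset.univ.val := by
    rw [h2]
    have := Polynomial.roots_multiset_prod_X_sub_C (Multiset.map (fun i => (x i : ℂ)) Finset.univ.val)
    rw [Multiset.map_map] at this
    exact this
  rw [h3] at h1
  have h4 : Multiset.map x Finset.univ.val = Multiset.map h.eigenvalues Finset.univ.val := by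
    have := congrArg (Multiset.map Complex.re) h1
    simpa [Multiset.map_map, Function.comp_def] using this
  have h5 : List.Perm (List.ofFn h.eigenvalues) (List.ofFn x) := by
    rw [← Multiset.coe_eq_coe]
    simpa [Fin.univ_val_map] using h4.symm
  unfold sortAsc
  have h6 : List.Perm (List.ofFn (h.eigenvalues ∘ Tuple.sort h.eigenvalues))
      (List.ofFn (x ∘ Tuple.sort x)) :=
    ((Equiv.Perm.ofFn_comp_perm _ _).trans h5).trans (Equiv.Perm.ofFn_comp_perm _ _).symm
  exact List.ofFn_injective (h6.eq_of_pairwise'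
    (Tuple.monotone_sort h.eigenvalues).sortedLE_ofFn.pairwise
    (Tuple.monotone_sort x).sortedLE_ofFn.pairwise)

lemma sortDesc_eq {m : ℕ} (x : Fin m → ℝ) : sortDesc x = fun i => sortAsc x i.rev := rfl

open Matrix in
lemma eigsAsc_of_diag {d : ℕ} {S U : Matrix (Fin d) (Fin d) ℂ} {x : Fin d → ℝ} (hU : Uᴴ * U = 1)
    (hS : S = U * diagonal (fun l => (x l : ℂ)) * Uᴴ) : eigsAsc S = sortAsc x := by
  have h := herm_of_diag hS
  rw [eigsAsc, dif_pos h, eig_perm hU hS h]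

open Matrix in
lemma eigsDesc_of_diag {d : ℕ} {S U : Matrix (Fin d) (Fin d) ℂ} {x : Fin d → ℝ} (hU : Uᴴ * U = 1)
    (hS : S = U * diagonal (fun l => (x l : ℂ)) * Uᴴ) : eigsDesc S = sortDesc x := by
  have h := herm_of_diag hS
  rw [eigsDesc, dif_pos h, sortDesc_eq, eig_perm hU hS h, sortDesc_eq]

lemma sum_sortAsc {m : ℕ} (x : Fin m → ℝ) (f : ℝ → ℝ) : ∑ i, f (sortAsc x i) = ∑ i, f (x i) :=
  Equiv.sum_comp (Tuple.sort x) (fun i => f (x i))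

lemma sum_sortDesc {m : ℕ} (x : Fin m → ℝ) (f : ℝ → ℝ) :
    ∑ i, f (sortDesc x i) = ∑ i, f (x i) := by
  rw [← sum_sortAsc x f]
  exact Equiv.sum_comp Fin.revPerm (fun i => f (sortAsc x i))

lemma sortDesc_of_antitone {m : ℕ} {x : Fin m → ℝ} (hx : Antitone x) : sortDesc x = x := by
  have h : Monotone (x ∘ Fin.revPerm) := fun i j hij => hx (Fin.rev_le_rev.2 hij)
  have := Tuple.comp_sort_eq_comp_iff_monotone.2 h
  ext i
  have h2 := congrFun this i.rev
  simp [sortDesc] at h2 ⊢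
  exact h2.symm

lemma sortDesc_antitone {m : ℕ} (x : Fin m → ℝ) : Antitone (sortDesc x) :=
  fun _ _ hij => Tuple.monotone_sort x (Fin.rev_le_rev.2 hij)

lemma sortDesc_comp {m : ℕ} (x : Fin m → ℝ) : sortDesc x = x ∘ (Fin.revPerm.trans (Tuple.sort x)) :=
  rfl

lemma sortAsc_comp_perm {m : ℕ} (x : Fin m → ℝ) (σ : Equiv.Perm (Fin m)) :
    sortAsc (x ∘ σ) = sortAsc x := Tuple.comp_perm_comp_sort_eq_comp_sort
lemma card_sortAsc {m : ℕ} (x : Fin m → ℝ) (p : ℝ → Prop) [DecidablePred p] :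
    (Finset.univ.filter (fun i => p (sortAsc x i))).card =
      (Finset.univ.filter (fun i => p (x i))).card := by
  have h := sum_sortAsc x (fun t => if p t then 1 else 0)
  simp only [Finset.sum_boole] at h
  exact_mod_cast h

lemma sortAsc_monotone {m : ℕ} (x : Fin m → ℝ) : Monotone (sortAsc x) := Tuple.monotone_sort x

lemma comb_eq {d s : ℕ} (x y : Fin d → ℝ) (c : ℝ) (hy : Antitone y) (hy0 : ∀ i, 0 ≤ y i)
    (hys : ∀ i : Fin d, y i ≠ 0 ↔ (i : ℕ) < s) (hxy : ∀ i : Fin d, (i : ℕ) < s → x i + y i = c)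
    (hop : sortDesc (fun i => x i + y i) = sortDesc (fun i => sortAsc x i + y i)) :
    ∀ i : Fin d, (i : ℕ) < s → sortAsc x i = x i := by
  have hle : ∀ i : Fin d, (i : ℕ) < s → sortAsc x i ≤ x i := by
    intro i hi
    rw [← Tuple.lt_card_le_iff_apply_le_of_monotone (sortAsc_monotone x),
      card_sortAsc x (fun t => t ≤ x i)]
    have : (Finset.Iic i).card ≤ (Finset.univ.filter (fun j => x j ≤ x i)).card := by
      apply Finset.card_le_card
      intro j hj
      have hj' : j ≤ i := by simpa using hj
      have h1 := hxy i hi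
      have h2 := hxy j (lt_of_le_of_lt hj' hi)
      have h3 := hy hj'
      simp only [Finset.mem_filter, Finset.mem_univ, true_and]
      linarith
    rw [Fin.card_Iic] at this
    omega
  have h1 : ∑ i, (x i + y i) ^ 2 = ∑ i, (sortAsc x i + y i) ^ 2 := by
    rw [← sum_sortDesc (fun i => x i + y i) (fun t => t ^ 2), hop,
      sum_sortDesc (fun i => sortAsc x i + y i) (fun t => t ^ 2)]
  have h2 : ∑ i, (sortAsc x i) ^ 2 = ∑ i, (x i) ^ 2 := sum_sortAsc x (fun t => t ^ 2)
  have h3 : ∑ i, (x i * y i - sortAsc x i * y i) = 0 := by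
    have : ∑ i, ((x i + y i) ^ 2 - (sortAsc x i + y i) ^ 2 - (x i ^ 2 - sortAsc x i ^ 2)) = 0 := by
      rw [Finset.sum_sub_distrib, Finset.sum_sub_distrib, Finset.sum_sub_distrib, h1, h2]; ring
    have h4 : ∑ i, ((x i + y i) ^ 2 - (sortAsc x i + y i) ^ 2 - (x i ^ 2 - sortAsc x i ^ 2)) =
        2 * ∑ i, (x i * y i - sortAsc x i * y i) := by
      rw [Finset.mul_sum]; exact Finset.sum_congr rfl fun i _ => by ring
    linarith
  have h5 : ∀ i ∈ Finset.univ, 0 ≤ x i * y i - sortAsc x i * y i := by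
    intro i _
    by_cases hi : (i : ℕ) < s
    · have := mul_le_mul_of_nonneg_right (hle i hi) (hy0 i)
      linarith
    · have : y i = 0 := by
        by_contra h; exact hi ((hys i).1 h)
      simp [this]
  intro i hi
  have h6 := (Finset.sum_eq_zero_iff_of_nonneg h5).1 h3 i (Finset.mem_univ _)
  have h7 := (hys i).2 hi
  have : (x i - sortAsc x i) * y i = 0 := by linarith
  rcases mul_eq_zero.1 this with h | h
  · linarith
  · exact absurd h h7

lemma exists_lt_of_sortAsc {d s : ℕ} (hs : s < d) (x : Fin d → ℝ) (c : ℝ)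
    (h : sortAsc x ⟨s, hs⟩ < c) : ∃ j : Fin d, s ≤ (j : ℕ) ∧ x j < c := by
  rw [← Tuple.lt_card_lt_iff_apply_lt_of_monotone (sortAsc_monotone x),
      card_sortAsc x (fun t => t < c)] at h
  by_contra! hcon
  have : (Finset.univ.filter (fun j => x j < c)).card ≤ (Finset.Iio (⟨s, hs⟩ : Fin d)).card := by
    apply Finset.card_le_card
    intro j hj
    simp only [Finset.mem_filter, Finset.mem_univ, true_and] at hj
    simp only [Finset.mem_Iio, Fin.lt_def]
    by_contra h'
    exact absurd (hcon j (by omega)) (not_le.2 hj)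
  rw [Fin.card_Iio] at this
  simp only at h this
  omega

lemma scalar_ab (r : ℂ) (hr : 4 * Complex.normSq r ≤ 1) : ∃ (α : ℝ) (β : ℂ),
    α ^ 2 + Complex.normSq β = 1 ∧ (α : ℂ) * star β = r ∧
    Complex.normSq β ≤ 2 * Complex.normSq r ∧ (r ≠ 0 → 0 < Complex.normSq β) := by
  set n := Complex.normSq r with hn
  have hn0 : 0 ≤ n := Complex.normSq_nonneg r
  set q := Real.sqrt (1 - 4 * n) with hq
  have hq0 : 0 ≤ q := Real.sqrt_nonneg _
  have hqq : q * q = 1 - 4 * n := Real.mul_self_sqrt (by linarith)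
  set p := (1 + q) / 2 with hp
  have hp0 : 1 / 2 ≤ p := by rw [hp]; linarith
  have hpp : p * (1 - p) = n := by rw [hp]; nlinarith
  have hs : Real.sqrt p * Real.sqrt p = p := Real.mul_self_sqrt (by linarith)
  have hs0 : Real.sqrt p ≠ 0 := by
    intro h; rw [h] at hs; linarith
  have hβ : Complex.normSq (star r / (Real.sqrt p : ℂ)) = 1 - p := by
    rw [Complex.normSq_div, Complex.normSq_ofReal, hs]
    have : Complex.normSq (star r) = n := Complex.normSq_conj r
    rw [this, ← hpp]
    field_simp
  refine ⟨Real.sqrt p, star r / (Real.sqrt p : ℂ), ?_, ?_, ?_, ?_⟩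
  · rw [hβ, pow_two, hs]; ring
  · have : (Real.sqrt p : ℂ) ≠ 0 := by exact_mod_cast hs0
    simp only [star_div₀, star_star]
    have h2 : star (Real.sqrt p : ℂ) = (Real.sqrt p : ℂ) := Complex.conj_ofReal _
    rw [h2]
    field_simp
  · rw [hβ, ← hpp]
    have : 0 ≤ 1 - p := by
      by_contra h; push Not at h; nlinarith
    nlinarith
  · intro h
    rw [Complex.normSq_pos]
    have : (Real.sqrt p : ℂ) ≠ 0 := by exact_mod_cast hs0
    exact div_ne_zero (star_ne_zero.2 h) this

lemma vec_ab {k : ℕ} (w : Fin k → ℂ) (hw : w ≠ 0) (a : Fin k → ℝ) (ha : ∀ i, 0 < a i) (δ : ℝ)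
    (hδ : 0 < δ) : ∃ (t : ℝ) (α : Fin k → ℝ) (β : Fin k → ℂ),
    (∀ i, α i ^ 2 + Complex.normSq (β i) = 1) ∧ (∀ i, (α i : ℂ) * star (β i) = t * w i) ∧
    0 < ∑ i, a i * Complex.normSq (β i) ∧ ∑ i, a i * Complex.normSq (β i) < δ := by
  set K := 1 + ∑ i, (4 + 2 * a i) * Complex.normSq (w i) with hK
  have hterm : ∀ i, 0 ≤ (4 + 2 * a i) * Complex.normSq (w i) := fun i =>
    mul_nonneg (by linarith [ha i]) (Complex.normSq_nonneg _)
  have hsum0 : 0 ≤ ∑ i, (4 + 2 * a i) * Complex.normSq (w i) :=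
    Finset.sum_nonneg fun i _ => hterm i
  have hK0 : 0 < K := by linarith
  set u := min 1 δ / K with hu
  have hm : 0 < min 1 δ := lt_min one_pos hδ
  have hu0 : 0 < u := div_pos hm hK0
  have huK : u * K = min 1 δ := by rw [hu]; field_simp
  set t := Real.sqrt u with ht
  have ht0 : 0 < t := Real.sqrt_pos.2 hu0
  have htt : t * t = u := Real.mul_self_sqrt hu0.le
  have hnt : ∀ i, Complex.normSq ((t : ℂ) * w i) = u * Complex.normSq (w i) := by
    intro i; rw [Complex.normSq_mul, Complex.normSq_ofReal, htt]
  have h4 : ∀ i, 4 * Complex.normSq ((t : ℂ) * w i) ≤ 1 := by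
    intro i
    rw [hnt]
    have h1 : (4 + 2 * a i) * Complex.normSq (w i) ≤ K := by
      have := Finset.single_le_sum (f := fun i => (4 + 2 * a i) * Complex.normSq (w i))
        (fun i _ => hterm i) (Finset.mem_univ i)
      linarith
    have h2 : 4 * Complex.normSq (w i) ≤ K := by
      have := mul_nonneg (ha i).le (Complex.normSq_nonneg (w i))
      linarith
    have h3 := mul_le_mul_of_nonneg_left h2 hu0.le
    have := min_le_left 1 δ
    linarith
  choose α β h1 h2 h3 h5 using fun i => scalar_ab _ (h4 i)
  refine ⟨t, α, β, h1, h2, ?_, ?_⟩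
  · obtain ⟨i, hi⟩ := Function.ne_iff.1 hw
    apply Finset.sum_pos' (fun i _ => mul_nonneg (ha i).le (Complex.normSq_nonneg _))
    refine ⟨i, Finset.mem_univ _, mul_pos (ha i) (h5 i ?_)⟩
    refine mul_ne_zero ?_ hi
    exact_mod_cast ht0.ne'
  · have hle : ∑ i, a i * Complex.normSq (β i) ≤
        u * ∑ i, (4 + 2 * a i) * Complex.normSq (w i) := by
      rw [Finset.mul_sum]
      apply Finset.sum_le_sum
      intro i _
      have h6 := h3 i
      rw [hnt] at h6
      have h7 := mul_le_mul_of_nonneg_left h6 (ha i).le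
      have h8 := mul_nonneg hu0.le (Complex.normSq_nonneg (w i))
      nlinarith
    have h9 : u * ∑ i, (4 + 2 * a i) * Complex.normSq (w i) < u * K :=
      mul_lt_mul_of_pos_left (by linarith) hu0
    have := min_le_right 1 δ
    linarith
open Matrix in
lemma diag_conj_inj {d : ℕ} {U : Matrix (Fin d) (Fin d) ℂ} (hU : Uᴴ * U = 1)
    {p q : Fin d → ℂ} (h : U * diagonal p * Uᴴ = U * diagonal q * Uᴴ) (l : Fin d) : p l = q l := by
  have h1 : Uᴴ * (U * diagonal p * Uᴴ) * U = Uᴴ * (U * diagonal q * Uᴴ) * U := by rw [h]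
  have h2 : ∀ r : Fin d → ℂ, Uᴴ * (U * diagonal r * Uᴴ) * U = diagonal r := by
    intro r
    calc Uᴴ * (U * diagonal r * Uᴴ) * U = (Uᴴ * U) * diagonal r * (Uᴴ * U) := by
          simp only [mul_assoc]
      _ = diagonal r := by rw [hU, one_mul, mul_one]
  rw [h2, h2] at h1
  have := congrFun (congrFun h1 l) l
  simpa using this

open Matrix in
lemma diag_conj_mul {d : ℕ} {U : Matrix (Fin d) (Fin d) ℂ} (hU : Uᴴ * U = 1)
    (p q : Fin d → ℂ) : (U * diagonal p * Uᴴ) * (U * diagonal q * Uᴴ) =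
      U * diagonal (fun l => p l * q l) * Uᴴ := by
  calc (U * diagonal p * Uᴴ) * (U * diagonal q * Uᴴ)
      = U * diagonal p * (Uᴴ * U) * diagonal q * Uᴴ := by simp only [mul_assoc]
    _ = _ := by rw [hU, mul_one, mul_assoc U, diagonal_mul_diagonal]

open Matrix in
lemma diag_conj_smul {d : ℕ} {U : Matrix (Fin d) (Fin d) ℂ} (z : ℂ) (p : Fin d → ℂ) :
    z • (U * diagonal p * Uᴴ) = U * diagonal (fun l => z * p l) * Uᴴ := by
  have : diagonal (fun l => z * p l) = z • diagonal p := by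
    rw [← diagonal_smul]; rfl
  rw [this, Matrix.mul_smul, Matrix.smul_mul]

open Matrix in
lemma diag_conj_add {d : ℕ} {U : Matrix (Fin d) (Fin d) ℂ} (p q : Fin d → ℂ) :
    (U * diagonal p * Uᴴ) + (U * diagonal q * Uᴴ) = U * diagonal (fun l => p l + q l) * Uᴴ := by
  rw [← diagonal_add, mul_add, add_mul]

open Matrix in
lemma diag_conj_trace {d : ℕ} {U : Matrix (Fin d) (Fin d) ℂ} (hU : Uᴴ * U = 1)
    (p : Fin d → ℂ) : (U * diagonal p * Uᴴ).trace = ∑ l, p l := by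
  rw [trace_mul_comm, ← mul_assoc, hU, one_mul, trace_diagonal]

open Matrix in
lemma diag_conj_nonneg {d : ℕ} {S U : Matrix (Fin d) (Fin d) ℂ} {x : Fin d → ℝ} (hU : Uᴴ * U = 1)
    (hS : S = U * diagonal (fun l => (x l : ℂ)) * Uᴴ) (hp : S.PosSemidef) (l : Fin d) :
    0 ≤ x l := by
  have h1 := hp.conjTranspose_mul_mul_same U
  have h2 : Uᴴ * S * U = diagonal (fun l => (x l : ℂ)) := by
    rw [hS]
    calc Uᴴ * (U * diagonal (fun l => (x l : ℂ)) * Uᴴ) * U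
        = (Uᴴ * U) * diagonal (fun l => (x l : ℂ)) * (Uᴴ * U) := by simp only [mul_assoc]
      _ = _ := by rw [hU, one_mul, mul_one]
  rw [h2] at h1
  have h3 := h1.diag_nonneg (i := l)
  rw [diagonal_apply_eq] at h3
  exact_mod_cast h3

lemma chord_strict {f : ℝ → ℝ} (hf : StrictConvexOn ℝ (Set.Ici 0) f) {b c p : ℝ} (hb : 0 ≤ b)
    (h1 : b < p) (h2 : p < c) : f p < f b + (f c - f b) / (c - b) * (p - b) := by
  have hcb : 0 < c - b := by linarith
  have hc0 : c ∈ Set.Ici (0 : ℝ) := by simp only [Set.mem_Ici]; linarith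
  have hbc : b ≠ c := by linarith
  have q1 : 0 < (c - p) / (c - b) := div_pos (by linarith) hcb
  have q2 : 0 < (p - b) / (c - b) := div_pos (by linarith) hcb
  have q3 : (c - p) / (c - b) + (p - b) / (c - b) = 1 := by field_simp; ring
  have := hf.2 (Set.mem_Ici.2 hb) hc0 hbc q1 q2 q3
  simp only [smul_eq_mul] at this
  have e1 : (c - p) / (c - b) * b + (p - b) / (c - b) * c = p := by field_simp; ring
  have e2 : (c - p) / (c - b) * f b + (p - b) / (c - b) * f c =
      f b + (f c - f b) / (c - b) * (p - b) := by field_simp; ring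
  rwa [e1, e2] at this

open Matrix in
/-- The strict decrease of the potential along the commuting perturbation. -/
lemma potential_decrease {d : ℕ} {f : ℝ → ℝ} (hf : StrictConvexOn ℝ (Set.Ici 0) f)
    (S B H : Matrix (Fin d) (Fin d) ℂ) (hS : S.IsHermitian) (hB : B.PosSemidef)
    (hH : H.IsHermitian) (b c τ : ℝ) (hb : 0 ≤ b) (hτ : 0 < τ) (hτc : τ < c - b)
    (hSB : S * B = (c : ℂ) • B) (hSH : S * H = (b : ℂ) • H) (hHB : H * B = 0)
    (hHH : H * H = H) (htH : H.trace = 1) (htB : B.trace = (τ : ℂ)) :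
    potential f (S + (-1 : ℂ) • B + (τ : ℂ) • H) < potential f S := by
  have hBS : B * S = (c : ℂ) • B := by
    have := congrArg conjTranspose hSB
    rw [conjTranspose_mul, hS, hB.1.eq, conjTranspose_smul, hB.1.eq] at this
    simpa using this
  have hHS : H * S = (b : ℂ) • H := by
    have := congrArg conjTranspose hSH
    rw [conjTranspose_mul, hS, hH.eq, conjTranspose_smul, hH.eq] at this
    simpa using this
  have hBH : B * H = 0 := by
    have := congrArg conjTranspose hHB
    rw [conjTranspose_mul, hH.eq, hB.1.eq] at this
    simpa using this
  obtain ⟨U, hU, -, x, hx⟩ := joint_diag (![S, B, H]) (by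
      intro i; fin_cases i
      · exact hS
      · exact hB.1
      · exact hH) (by
      intro i j; fin_cases i <;> fin_cases j <;> simp [hSB, hBS, hSH, hHS, hHB, hBH])
  have xS : S = U * diagonal (fun l => (x 0 l : ℂ)) * Uᴴ := hx 0
  have xB : B = U * diagonal (fun l => (x 1 l : ℂ)) * Uᴴ := hx 1
  have xH : H = U * diagonal (fun l => (x 2 l : ℂ)) * Uᴴ := hx 2
  clear hx
  generalize x 0 = σ at xS
  generalize x 1 = β at xB
  generalize x 2 = e at xH
  have r1 : ∀ l, σ l * β l = c * β l := by
    intro l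
    have h := hSB
    rw [xS, xB, diag_conj_mul hU, diag_conj_smul] at h
    exact_mod_cast diag_conj_inj hU h l
  have r2 : ∀ l, σ l * e l = b * e l := by
    intro l
    have h := hSH
    rw [xS, xH, diag_conj_mul hU, diag_conj_smul] at h
    exact_mod_cast diag_conj_inj hU h l
  have r3 : ∀ l, e l * β l = 0 := by
    intro l
    have h := hHB
    rw [← zero_smul ℂ B, xB, xH, diag_conj_mul hU, diag_conj_smul] at h
    have := diag_conj_inj hU h l
    simp only [zero_mul] at this
    exact_mod_cast this
  have r4 : ∀ l, e l * e l = e l := by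
    intro l
    have h := hHH
    rw [xH, diag_conj_mul hU] at h
    exact_mod_cast diag_conj_inj hU h l
  have r5 : ∑ l, e l = 1 := by
    have h := htH
    rw [xH, diag_conj_trace hU] at h
    exact_mod_cast h
  have r6 : ∑ l, β l = τ := by
    have h := htB
    rw [xB, diag_conj_trace hU] at h
    exact_mod_cast h
  have r7 : ∀ l, 0 ≤ β l := diag_conj_nonneg hU xB hB
  have xS' : S + (-1 : ℂ) • B + (τ : ℂ) • H =
      U * diagonal (fun l => ((σ l - β l + τ * e l : ℝ) : ℂ)) * Uᴴ := by
    rw [xS, xB, xH, diag_conj_smul, diag_conj_smul, diag_conj_add, diag_conj_add]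
    congr 3
    ext l
    push_cast
    ring
  unfold potential
  rw [eigsDesc_of_diag hU xS', eigsDesc_of_diag hU xS, sum_sortDesc, sum_sortDesc]
  set m := (f c - f b) / (c - b) with hm
  have hmc : m * (c - b) = f c - f b := by
    have : c - b ≠ 0 := by linarith
    rw [hm]; field_simp
  have key : ∀ l, f (σ l - β l + τ * e l) ≤ f (σ l) - m * β l + m * τ * e l ∧
      (e l ≠ 0 → f (σ l - β l + τ * e l) < f (σ l) - m * β l + m * τ * e l) := by
    intro l
    by_cases he : e l = 0
    · refine ⟨?_, fun h => absurd he h⟩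
      by_cases hβ : β l = 0
      · simp [he, hβ]
      · have hβ0 : 0 < β l := lt_of_le_of_ne (r7 l) (Ne.symm hβ)
        have hσ : σ l = c := mul_right_cancel₀ hβ (r1 l)
        have hle : β l ≤ τ := by
          rw [← r6]; exact Finset.single_le_sum (fun i _ => r7 i) (Finset.mem_univ l)
        have := chord_strict hf (b := b) (c := c) (p := c - β l) hb (by linarith) (by linarith)
        rw [← hm] at this
        rw [he, hσ]
        simp only [mul_zero, add_zero]
        nlinarith
    · have h1 : e l = 1 := mul_right_cancel₀ he (by rw [r4, one_mul])
      have h2 : β l = 0 := by have := r3 l; rw [h1, one_mul] at this; exact this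
      have h3 : σ l = b := mul_right_cancel₀ he (r2 l)
      have := chord_strict hf (b := b) (c := c) (p := b + τ) hb (by linarith) (by linarith)
      rw [← hm] at this
      have h4 : f (σ l - β l + τ * e l) < f (σ l) - m * β l + m * τ * e l := by
        rw [h1, h2, h3]
        simp only [sub_zero, mul_one, mul_zero]
        have e3 : b + τ - b = τ := by ring
        rwa [e3] at this
      exact ⟨h4.le, fun _ => h4⟩
  have hex : ∃ l ∈ Finset.univ, e l ≠ 0 := by
    by_contra! hcon
    rw [Finset.sum_eq_zero hcon] at r5
    exact zero_ne_one r5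
  obtain ⟨l, hl, hel⟩ := hex
  calc ∑ i, f (σ i - β i + τ * e i) < ∑ i, (f (σ i) - m * β i + m * τ * e i) :=
        Finset.sum_lt_sum (fun i _ => (key i).1) ⟨l, hl, (key l).2 hel⟩
    _ = ∑ i, f (σ i) := by
        rw [Finset.sum_add_distrib, Finset.sum_sub_distrib, ← Finset.mul_sum, ← Finset.mul_sum,
          r5, r6]; ring
open Matrix in
lemma frameOp_eq {d n : ℕ} (G : Fin n → Fin d → ℂ) :
    frameOp G = (Matrix.of fun r i => G i r) * (Matrix.of fun r i => G i r)ᴴ := by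
  ext r q
  simp [frameOp, Matrix.sum_apply, vecMulVec_apply, mul_apply]

open Matrix in
lemma frameOp_psd {d n : ℕ} (G : Fin n → Fin d → ℂ) : (frameOp G).PosSemidef := by
  rw [frameOp_eq]; exact posSemidef_self_mul_conjTranspose _

lemma normSqVec_eq {d : ℕ} (g : Fin d → ℂ) : ((normSqVec g : ℝ) : ℂ) = ∑ r, g r * star (g r) := by
  rw [normSqVec]
  push_cast
  exact Finset.sum_congr rfl fun r _ => (Complex.mul_conj _).symm

open Matrix in
lemma exists_better {d k : ℕ} (hdk : d ≤ k) (S0 : Matrix (Fin d) (Fin d) ℂ) (hS0 : S0.IsHermitian)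
    (a : Fin k → ℝ) (ha : ∀ i, 0 < a i)
    {f : ℝ → ℝ} (hf : StrictConvexOn ℝ (Set.Ici 0) f)
    (G : Fin k → Fin d → ℂ) (hG : ∀ i, normSqVec (G i) = a i) (b c : ℝ) (hb : 0 ≤ b) (hbc : b < c)
    (hSG : (S0 + frameOp G) * frameOp G = (c : ℂ) • frameOp G)
    (h : Fin d → ℂ) (hh : star h ⬝ᵥ h = 1) (hS0h : S0 *ᵥ h = (b : ℂ) • h)
    (hGh : frameOp G *ᵥ h = 0) :
    ∃ G' : Fin k → Fin d → ℂ, (∀ i, normSqVec (G' i) = a i) ∧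
      potential f (S0 + frameOp G') < potential f (S0 + frameOp G) := by
  set M : Matrix (Fin d) (Fin k) ℂ := Matrix.of fun r i => G i r with hM
  have hMM : frameOp G = M * Mᴴ := frameOp_eq G
  have hMh : Mᴴ *ᵥ h = 0 := by
    rw [hMM] at hGh
    exact (self_mul_conjTranspose_mulVec_eq_zero M h).1 hGh
  have hMh' : star h ᵥ* M = 0 := by
    have := congrArg star hMh
    rw [star_mulVec, conjTranspose_conjTranspose] at this
    simpa using this
  have hMi : ∀ i, ∑ r, star (h r) * G i r = 0 := by
    intro i
    have := congrFun hMh' i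
    simpa [vecMul, dotProduct, hM] using this
  have hMi' : ∀ i, ∑ r, h r * star (G i r) = 0 := by
    intro i
    have := congrArg star (hMi i)
    simpa [star_sum, mul_comm] using this
  have hSM : (S0 + frameOp G) * M = (c : ℂ) • M := by
    have h1 : (S0 + frameOp G - (c : ℂ) • 1) * (M * Mᴴ) = 0 := by
      rw [sub_mul, ← hMM, hSG, Matrix.smul_mul, one_mul, sub_self]
    rw [mul_self_mul_conjTranspose_eq_zero, Matrix.sub_mul, Matrix.smul_mul, Matrix.one_mul] at h1
    exact sub_eq_zero.1 h1
  -- a nontrivial linear dependency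
  obtain ⟨z, hz0, hz⟩ : ∃ z : Fin k → ℂ, z ≠ 0 ∧ M *ᵥ z = 0 := by
    by_contra! hcon
    have hinj : Function.Injective (M.mulVecLin) := by
      rw [← LinearMap.ker_eq_bot, LinearMap.ker_eq_bot']
      intro z hz
      by_contra hz0
      exact hcon z hz0 (by simpa using hz)
    have hkd : k ≤ d := by
      have := LinearMap.finrank_le_finrank_of_injective hinj
      simpa using this
    have hkd' : k = d := le_antisymm hkd hdk
    have hsurj : Function.Surjective (M.mulVecLin) :=
      (LinearMap.injective_iff_surjective_of_finrank_eq_finrank (by simp [hkd'])).1 hinj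
    obtain ⟨z, hz⟩ := hsurj h
    have h1 : star h ⬝ᵥ h = 0 := by
      conv_lhs => rw [← hz]
      rw [mulVecLin_apply, dotProduct_mulVec]
      have : star (M.mulVecLin z) = star h := by rw [hz]
      rw [mulVecLin_apply] at this
      rw [this, hMh', zero_dotProduct]
    rw [hh] at h1
    exact one_ne_zero h1
  have hsa : ∀ i, ((Real.sqrt (a i) : ℝ) : ℂ) ≠ 0 := fun i => by
    exact_mod_cast (Real.sqrt_pos.2 (ha i)).ne'
  have hsa2 : ∀ i, ((Real.sqrt (a i) : ℝ) : ℂ) * (Real.sqrt (a i) : ℝ) = (a i : ℂ) := fun i => by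
    exact_mod_cast Real.mul_self_sqrt (ha i).le
  set w : Fin k → ℂ := fun i => z i / (Real.sqrt (a i) : ℝ) with hw
  have hw0 : w ≠ 0 := by
    obtain ⟨i, hi⟩ := Function.ne_iff.1 hz0
    exact Function.ne_iff.2 ⟨i, div_ne_zero hi (hsa i)⟩
  obtain ⟨t, α, β, h1, h2, h3, h4⟩ := vec_ab w hw0 a ha (c - b) (by linarith)
  set τ := ∑ i, a i * Complex.normSq (β i) with hτ
  have hββ : ∀ i, (Complex.normSq (β i) : ℂ) = β i * star (β i) := fun i =>
    (Complex.mul_conj _).symm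
  have h1' : ∀ i, (α i : ℂ) * α i = 1 - β i * star (β i) := by
    intro i
    rw [← hββ]
    have := h1 i
    have h5 : α i * α i = 1 - Complex.normSq (β i) := by nlinarith
    exact_mod_cast h5
  have hαs : ∀ i, star (α i : ℂ) = α i := fun i => Complex.conj_ofReal _
  have hss : ∀ i, star ((Real.sqrt (a i) : ℝ) : ℂ) = (Real.sqrt (a i) : ℝ) :=
    fun i => Complex.conj_ofReal _
  have hcross : ∀ r, ∑ i, (α i : ℂ) * star (β i) * (Real.sqrt (a i) : ℝ) * G i r = 0 := by
    intro r
    have h5 := congrFun hz r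
    simp only [mulVec, dotProduct, hM, of_apply, Pi.zero_apply] at h5
    calc ∑ i, (α i : ℂ) * star (β i) * (Real.sqrt (a i) : ℝ) * G i r
        = ∑ i, (t : ℂ) * (G i r * z i) := by
          refine Finset.sum_congr rfl fun i _ => ?_
          have := hsa i
          rw [h2, hw]
          field_simp
      _ = 0 := by rw [← Finset.mul_sum, h5, mul_zero]
  have hcross' : ∀ r, ∑ i, (α i : ℂ) * β i * (Real.sqrt (a i) : ℝ) * star (G i r) = 0 := by
    intro r
    have := congrArg star (hcross r)
    rw [star_sum, star_zero] at this
    rw [← this]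
    refine Finset.sum_congr rfl fun i _ => ?_
    simp only [star_mul', star_star, hαs, hss]
  set G' : Fin k → Fin d → ℂ := fun i r =>
    (α i : ℂ) * G i r + (Real.sqrt (a i) : ℝ) * β i * h r with hG'
  have hprod : ∀ i r q, G' i r * star (G' i q) = G i r * star (G i q)
      - (β i * star (β i)) * (G i r * star (G i q))
      + (a i : ℂ) * (β i * star (β i)) * (h r * star (h q))
      + ((α i : ℂ) * star (β i) * (Real.sqrt (a i) : ℝ) * G i r) * star (h q)
      + ((α i : ℂ) * β i * (Real.sqrt (a i) : ℝ) * star (G i q)) * h r := by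
    intro i r q
    simp only [hG', star_add, star_mul', hαs, hss]
    linear_combination (G i r * star (G i q)) * h1' i +
      (β i * star (β i)) * (h r * star (h q)) * hsa2 i
  have hhh : ∑ r, h r * star (h r) = 1 := by
    rw [← hh]; simp [dotProduct, mul_comm]
  refine ⟨G', ?_, ?_⟩
  · intro i
    have : ((normSqVec (G' i) : ℝ) : ℂ) = ((a i : ℝ) : ℂ) := by
      rw [normSqVec_eq]
      have hg : ∑ r, G i r * star (G i r) = (a i : ℂ) := by rw [← normSqVec_eq, hG]
      calc ∑ r, G' i r * star (G' i r)
          = ∑ r, (G i r * star (G i r) - (β i * star (β i)) * (G i r * star (G i r))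
            + (a i : ℂ) * (β i * star (β i)) * (h r * star (h r))
            + ((α i : ℂ) * star (β i) * (Real.sqrt (a i) : ℝ)) * (star (h r) * G i r)
            + ((α i : ℂ) * β i * (Real.sqrt (a i) : ℝ)) * (h r * star (G i r))) :=
            Finset.sum_congr rfl fun r _ => by rw [hprod]; ring
        _ = (a i : ℂ) := by
            simp only [Finset.sum_add_distrib, Finset.sum_sub_distrib, ← Finset.mul_sum]
            rw [hg, hhh, hMi, hMi']; ring
    exact_mod_cast this
  · set B := M * diagonal (fun i => (Complex.normSq (β i) : ℂ)) * Mᴴ with hB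
    set H := vecMulVec h (star h) with hH
    have hfo : S0 + frameOp G' = (S0 + frameOp G) + (-1 : ℂ) • B + (τ : ℂ) • H := by
      ext r q
      simp only [Matrix.add_apply, Matrix.smul_apply, smul_eq_mul]
      have e1 : frameOp G' r q = ∑ i, G' i r * star (G' i q) := by
        simp [frameOp, Matrix.sum_apply, vecMulVec_apply]
      have e2 : frameOp G r q = ∑ i, G i r * star (G i q) := by
        simp [frameOp, Matrix.sum_apply, vecMulVec_apply]
      have e3 : B r q = ∑ i, (β i * star (β i)) * (G i r * star (G i q)) := by
        rw [hB, mul_apply]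
        refine Finset.sum_congr rfl fun i _ => ?_
        rw [mul_diagonal, hββ, conjTranspose_apply, hM]
        simp only [of_apply]
        ring
      have e4 : H r q = h r * star (h q) := by simp [hH, vecMulVec_apply]
      have e5 : (τ : ℂ) = ∑ i, (a i : ℂ) * (β i * star (β i)) := by
        rw [hτ]; push_cast
        exact Finset.sum_congr rfl fun i _ => by rw [hββ]
      rw [e1, e2, e3, e4, e5]
      simp only [hprod, Finset.sum_add_distrib, Finset.sum_sub_distrib, ← Finset.sum_mul]
      rw [hcross, hcross']
      ring
    rw [hfo]
    have hHM : H * M = 0 := by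
      rw [hH, vecMulVec_mul, hMh']
      ext r q
      simp [vecMulVec_apply]
    have hSh : (S0 + frameOp G) *ᵥ h = (b : ℂ) • h := by
      rw [add_mulVec, hS0h, hGh, add_zero]
    refine potential_decrease hf _ B H (hS0.add (frameOp_psd G).1) ?_ ?_ b c τ hb h3 h4 ?_ ?_ ?_ ?_
      ?_ ?_
    · apply PosSemidef.mul_mul_conjTranspose_same
      apply PosSemidef.diagonal
      intro i
      have := Complex.normSq_nonneg (β i)
      simp only [Pi.zero_apply]
      exact_mod_cast this
    · rw [IsHermitian, hH, conjTranspose_vecMulVec, star_star]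
    · rw [hB, ← Matrix.mul_assoc, ← Matrix.mul_assoc, hSM, Matrix.smul_mul, Matrix.smul_mul]
    · rw [hH, mul_vecMulVec, hSh, smul_vecMulVec]
    · rw [hB, ← Matrix.mul_assoc, ← Matrix.mul_assoc, hHM, Matrix.zero_mul, Matrix.zero_mul]
    · rw [hH, vecMulVec_mul_vecMulVec, hh, one_smul]
    · rw [hH, trace_vecMulVec, dotProduct_comm, hh]
    · rw [hB, trace_mul_comm, ← Matrix.mul_assoc, trace, hτ]
      push_cast
      refine Finset.sum_congr rfl fun i _ => ?_
      rw [diag_apply, mul_diagonal, ← hG, normSqVec_eq, mul_apply]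
      congr 1
      refine Finset.sum_congr rfl fun r _ => ?_
      simp [hM, mul_comm]
lemma sum_pad {d k : ℕ} (hdk : d ≤ k) (φ : Fin d → ℝ) :
    ∑ i : Fin k, (if h : (i : ℕ) < d then φ ⟨i, h⟩ else 0) = ∑ l, φ l := by
  obtain ⟨e, rfl⟩ := Nat.exists_eq_add_of_le hdk
  rw [Fin.sum_univ_add]
  simp

open Matrix in
lemma schur_maj {d k : ℕ} (hdk : d ≤ k) (a : Fin k → ℝ) (ha : Antitone a)
    (G : Fin k → Fin d → ℂ) (hG : ∀ i, normSqVec (G i) = a i)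
    (U : Matrix (Fin d) (Fin d) ℂ) (hU : Uᴴ * U = 1) (hU' : U * Uᴴ = 1) (y : Fin d → ℝ)
    (hy : Antitone y) (hy0 : ∀ i, 0 ≤ y i)
    (hGU : frameOp G = U * diagonal (fun l => (y l : ℂ)) * Uᴴ) : MajorizedByPad a y := by
  set M : Matrix (Fin d) (Fin k) ℂ := Matrix.of fun r i => G i r with hM
  have hMM : frameOp G = M * Mᴴ := frameOp_eq G
  set C := Uᴴ * M with hC
  have hCC : C * Cᴴ = diagonal (fun l => (y l : ℂ)) := by
    rw [hC, conjTranspose_mul, conjTranspose_conjTranspose]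
    calc Uᴴ * M * (Mᴴ * U) = Uᴴ * (M * Mᴴ) * U := by simp only [Matrix.mul_assoc]
      _ = (Uᴴ * U) * diagonal (fun l => (y l : ℂ)) * (Uᴴ * U) := by
          rw [← hMM, hGU]; simp only [Matrix.mul_assoc]
      _ = _ := by rw [hU, Matrix.one_mul, Matrix.mul_one]
  have hCM : Cᴴ * C = Mᴴ * M := by
    rw [hC, conjTranspose_mul, conjTranspose_conjTranspose]
    calc Mᴴ * U * (Uᴴ * M) = Mᴴ * (U * Uᴴ) * M := by simp only [Matrix.mul_assoc]
      _ = _ := by rw [hU', Matrix.mul_one]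
  have hN : ∀ l i, (Complex.normSq (C l i) : ℂ) = C l i * star (C l i) := fun l i =>
    (Complex.mul_conj _).symm
  have hort : ∀ l m, ∑ i, C l i * star (C m i) = if l = m then (y l : ℂ) else 0 := by
    intro l m
    have := congrFun (congrFun hCC l) m
    rw [mul_apply] at this
    simpa [diagonal_apply] using this
  have hR : ∀ l, ∑ i, Complex.normSq (C l i) = y l := by
    intro l
    have := hort l l
    simp only [← hN, if_true] at this
    exact_mod_cast this
  have hA : ∀ i, ∑ l, Complex.normSq (C l i) = a i := by
    intro i
    have h1 := congrFun (congrFun hCM i) i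
    rw [mul_apply, mul_apply] at h1
    have h2 : ∑ l, (Complex.normSq (C l i) : ℂ) = ((a i : ℝ) : ℂ) := by
      rw [← hG, normSqVec_eq]
      simp only [hN]
      simpa [hM, mul_comm] using h1
    exact_mod_cast h2
  have hQ : ∀ i, ∑ l, Complex.normSq (C l i) / y l ≤ 1 := by
    intro i
    set q := ∑ l, Complex.normSq (C l i) / y l with hq
    set r : Fin k → ℂ := fun m => ∑ l, (star (C l i) / y l) * C l m with hr
    have hri : r i = (q : ℂ) := by
      rw [hr, hq]; push_cast
      refine Finset.sum_congr rfl fun l _ => ?_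
      rw [hN]; ring
    have hsum : ∑ m, Complex.normSq (r m) = q := by
      have : ∑ m, (Complex.normSq (r m) : ℂ) = (q : ℂ) := by
        have hstep : ∀ m, (Complex.normSq (r m) : ℂ) =
            ∑ l, ∑ l', (star (C l i) / y l) * (C l' i / y l') * (C l m * star (C l' m)) := by
          intro m
          have e1 : (Complex.normSq (r m) : ℂ) = r m * star (r m) := (Complex.mul_conj _).symm
          rw [e1, hr]
          simp only [star_sum, Finset.sum_mul_sum]
          refine Finset.sum_congr rfl fun l _ => Finset.sum_congr rfl fun l' _ => ?_
          have e2 : star (y l' : ℂ) = y l' := Complex.conj_ofReal _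
          simp only [star_mul', star_div₀, star_star, e2]
          ring
        simp only [hstep]
        rw [Finset.sum_comm]
        rw [hq]; push_cast
        refine Finset.sum_congr rfl fun l _ => ?_
        rw [Finset.sum_comm]
        simp only [← Finset.mul_sum, hort]
        simp only [mul_ite, mul_zero, Finset.sum_ite_eq, Finset.mem_univ, if_true]
        rw [hN]
        by_cases hyl : (y l : ℂ) = 0
        · simp [hyl]
        · field_simp
      exact_mod_cast this
    have h1 : Complex.normSq (r i) ≤ q := by
      rw [← hsum]
      exact Finset.single_le_sum (f := fun m => Complex.normSq (r m))
        (fun m _ => Complex.normSq_nonneg _) (Finset.mem_univ i)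
    rw [hri, Complex.normSq_ofReal] at h1
    by_contra! hcon
    nlinarith
  have hpa : pad a k = a := by
    ext i; simp [pad]
  have hpy : Antitone (pad y k) := by
    intro i j hij
    have hij' : (i : ℕ) ≤ j := hij
    unfold pad
    by_cases hj : (j : ℕ) < d
    · have hi : (i : ℕ) < d := by omega
      rw [dif_pos hj, dif_pos hi]
      exact hy hij'
    · rw [dif_neg hj]
      split_ifs
      · exact hy0 _
      · exact le_rfl
  unfold MajorizedByPad
  rw [max_eq_left hdk, hpa]
  refine ⟨fun j => ?_, ?_⟩
  · rw [sortDesc_of_antitone ha, sortDesc_of_antitone hpy]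
    have hRHS : ∑ i ∈ Finset.Iic j, pad y k i = ∑ l : Fin d, if (l : ℕ) ≤ j then y l else 0 := by
      rw [← sum_pad hdk (fun l : Fin d => if (l : ℕ) ≤ j then y l else 0)]
      rw [← Finset.sum_filter_add_sum_filter_not Finset.univ (fun i : Fin k => i ≤ j)]
      have hz : ∑ i ∈ Finset.univ.filter (fun i : Fin k => ¬ i ≤ j),
          (if h : (i : ℕ) < d then (if (i : ℕ) ≤ j then y ⟨i, h⟩ else 0) else 0) = 0 := by
        apply Finset.sum_eq_zero
        intro i hi
        have : ¬ (i : ℕ) ≤ j := by simpa using hi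
        simp [this]
      rw [hz, add_zero]
      apply Finset.sum_congr
      · ext i; simp
      · intro i hi
        have : (i : ℕ) ≤ j := by simpa using hi
        simp [pad, this]
    set cc : Fin d → ℝ := fun l => ∑ i ∈ Finset.Iic j, Complex.normSq (C l i) with hcc
    have hLHS : ∑ i ∈ Finset.Iic j, a i = ∑ l, cc l := by
      rw [hcc, Finset.sum_comm]
      exact Finset.sum_congr rfl fun i _ => (hA i).symm
    have hcc0 : ∀ l, 0 ≤ cc l := fun l => Finset.sum_nonneg fun i _ => Complex.normSq_nonneg _
    have hccy : ∀ l, cc l ≤ y l := by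
      intro l
      rw [← hR l]
      exact Finset.sum_le_sum_of_subset_of_nonneg (Finset.subset_univ _)
        fun i _ _ => Complex.normSq_nonneg _
    rw [hLHS, hRHS]
    by_cases hjd : (j : ℕ) < d
    · set v := y ⟨j, hjd⟩ with hv
      have hv0 : 0 ≤ v := hy0 _
      have hp : ∀ l, cc l = y l * (cc l / y l) := by
        intro l
        by_cases h0 : y l = 0
        · have := hccy l
          have := hcc0 l
          rw [h0]; simp; linarith
        · field_simp
      have hp0 : ∀ l, 0 ≤ cc l / y l := fun l => div_nonneg (hcc0 l) (hy0 l)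
      have hp1 : ∀ l, cc l / y l ≤ 1 := fun l => div_le_one_of_le₀ (hccy l) (hy0 l)
      have hps : ∑ l, cc l / y l ≤ (j : ℝ) + 1 := by
        have : ∑ l, cc l / y l = ∑ i ∈ Finset.Iic j, ∑ l, Complex.normSq (C l i) / y l := by
          rw [Finset.sum_comm]
          exact Finset.sum_congr rfl fun l _ => by rw [hcc, Finset.sum_div]
        rw [this]
        calc ∑ i ∈ Finset.Iic j, ∑ l, Complex.normSq (C l i) / y l
            ≤ ∑ i ∈ Finset.Iic j, (1 : ℝ) := Finset.sum_le_sum fun i _ => hQ i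
          _ = (j : ℝ) + 1 := by simp
      have hterm : ∀ l : Fin d, cc l ≤ (if (l : ℕ) ≤ j then y l else 0)
          + v * (cc l / y l) - (if (l : ℕ) ≤ j then v else 0) := by
        intro l
        have e := hp l
        have e0 := hp0 l
        have e1 := hp1 l
        set p := cc l / y l with hpdef
        rw [e]
        by_cases hl : (l : ℕ) ≤ j
        · have : v ≤ y l := hy (show l ≤ ⟨j, hjd⟩ from hl)
          simp only [hl, if_true]
          nlinarith
        · have : y l ≤ v := hy (show (⟨j, hjd⟩ : Fin d) ≤ l from (not_le.1 hl).le)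
          simp only [hl, if_false]
          nlinarith
      have hcard : ∑ l : Fin d, (if (l : ℕ) ≤ j then v else 0) = v * ((j : ℝ) + 1) := by
        rw [← Finset.sum_filter]
        have : Finset.univ.filter (fun l : Fin d => (l : ℕ) ≤ j) = Finset.Iic ⟨j, hjd⟩ := by
          ext l; simp [Fin.le_def]
        rw [this]
        simp
        ring
      have := Finset.sum_le_sum (s := Finset.univ) fun l _ => hterm l
      rw [Finset.sum_sub_distrib, Finset.sum_add_distrib, ← Finset.mul_sum, hcard] at this
      have := mul_le_mul_of_nonneg_left hps hv0
      linarith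
    · apply Finset.sum_le_sum
      intro l _
      have : (l : ℕ) ≤ j := by have := l.isLt; omega
      simp only [this, if_true]
      exact hccy l
  · have : ∑ i, pad y k i = ∑ l, y l := sum_pad hdk y
    rw [this]
    calc ∑ i, a i = ∑ i, ∑ l, Complex.normSq (C l i) :=
          Finset.sum_congr rfl fun i _ => (hA i).symm
      _ = ∑ l, y l := by
          rw [Finset.sum_comm]; exact Finset.sum_congr rfl fun l _ => hR l

open Matrix in
lemma diag_reindex {d : ℕ} (U : Matrix (Fin d) (Fin d) ℂ) (x : Fin d → ℝ)
    (σ : Equiv.Perm (Fin d)) :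
    U * diagonal (fun l => (x l : ℂ)) * Uᴴ =
      U.submatrix id σ * diagonal (fun l => (x (σ l) : ℂ)) * (U.submatrix id σ)ᴴ := by
  ext r q
  rw [mul_apply, mul_apply]
  simp only [mul_diagonal, conjTranspose_apply, submatrix_apply, id]
  exact (Equiv.sum_comp σ (fun l => U r l * (x l : ℂ) * star (U q l))).symm

theorem stmt_10 {d n₀ k : ℕ} (hdk : d ≤ k)
    (F₀ : Fin n₀ → Fin d → ℂ) (a : Fin k → ℝ)
    (ha_pos : ∀ i, 0 < a i) (ha_mono : Antitone a)
    (f : ℝ → ℝ) (hf : StrictConvexOn ℝ (Set.Ici 0) f) (hf0 : ∀ x ∈ Set.Ici (0 : ℝ), 0 ≤ f x)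
    (G : Fin k → Fin d → ℂ) (hG : ∀ i, normSqVec (G i) = a i)
    (hop : eigsDesc (frameOp F₀ + frameOp G) =
      sortDesc (fun i => eigsAsc (frameOp F₀) i + eigsDesc (frameOp G) i))
    (hmin : ∀ G' : Fin k → Fin d → ℂ, (∀ i, normSqVec (G' i) = a i) →
      potential f (frameOp F₀ + frameOp G) ≤ potential f (frameOp F₀ + frameOp G'))
    (c : ℝ) (hc : 0 < c)
    (hW : (frameOp G).rank < d)
    (hSW : ∀ x : Fin d → ℂ, (frameOp F₀ + frameOp G).mulVec ((frameOp G).mulVec x) =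
      (c : ℂ) • (frameOp G).mulVec x)
    (s : ℕ) (hs : s = (frameOp G).rank)
    (hsmu : ∀ i : Fin d, eigsDesc (frameOp G) i ≠ 0 ↔ (i : ℕ) < s) :
    get1 (eigsAsc (frameOp F₀)) s < c ∧ c ≤ get1 (eigsAsc (frameOp F₀)) (s + 1) ∧
    (∀ i : Fin d, eigsAsc (frameOp F₀) i + eigsDesc (frameOp G) i =
      if (i : ℕ) < s then c else eigsAsc (frameOp F₀) i) ∧
    Monotone (fun i => eigsAsc (frameOp F₀) i + eigsDesc (frameOp G) i) ∧
    (∀ i, eigsAsc (frameOp F₀) i ≤ eigsAsc (frameOp F₀) i + eigsDesc (frameOp G) i) ∧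
    MajorizedByPad a (eigsDesc (frameOp G)) := by
  classical
  have hP0 := frameOp_psd F₀
  have hPG := frameOp_psd G
  have hSG : (frameOp F₀ + frameOp G) * frameOp G = (c : ℂ) • frameOp G := by
    apply Matrix.ext_of_mulVec_single
    intro i
    rw [← Matrix.mulVec_mulVec, hSW, Matrix.smul_mulVec]
  have hcomm : frameOp F₀ * frameOp G = frameOp G * frameOp F₀ := by
    have h1 : frameOp F₀ * frameOp G = (c : ℂ) • frameOp G - frameOp G * frameOp G := by
      rw [← hSG, Matrix.add_mul, add_sub_cancel_right]
    have h2 := congrArg Matrix.conjTranspose h1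
    rw [Matrix.conjTranspose_mul, Matrix.conjTranspose_sub, Matrix.conjTranspose_smul,
      Matrix.conjTranspose_mul, hP0.1.eq, hPG.1.eq] at h2
    rw [h1, h2]
    simp
  obtain ⟨U₀, hU₀, -, X, hX⟩ := joint_diag (![frameOp F₀, frameOp G]) (by
      intro i; fin_cases i
      · exact hP0.1
      · exact hPG.1) (by
      intro i j; fin_cases i <;> fin_cases j <;> simp [hcomm])
  set σ : Equiv.Perm (Fin d) := Fin.revPerm.trans (Tuple.sort (X 1)) with hσ
  set U := U₀.submatrix id σ with hUdef
  set x : Fin d → ℝ := X 0 ∘ σ with hx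
  set y : Fin d → ℝ := X 1 ∘ σ with hy
  have hU : U.conjTranspose * U = 1 := by
    rw [hUdef, Matrix.conjTranspose_submatrix, ← Matrix.submatrix_mul _ _ _ id _ Function.bijective_id,
      hU₀, Matrix.submatrix_one_equiv]
  have hU' : U * U.conjTranspose = 1 := mul_eq_one_comm.mp hU
  have xS : frameOp F₀ = U * Matrix.diagonal (fun l => (x l : ℂ)) * U.conjTranspose :=
    (hX 0).trans (diag_reindex U₀ (X 0) σ)
  have yS : frameOp G = U * Matrix.diagonal (fun l => (y l : ℂ)) * U.conjTranspose :=
    (hX 1).trans (diag_reindex U₀ (X 1) σ)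
  have hyanti : Antitone y := sortDesc_antitone (X 1)
  clear_value x y U
  have hx0 := diag_conj_nonneg hU xS hP0
  have hy0 := diag_conj_nonneg hU yS hPG
  have eA : eigsAsc (frameOp F₀) = sortAsc x := eigsAsc_of_diag hU xS
  have eD : eigsDesc (frameOp G) = y := by
    rw [eigsDesc_of_diag hU yS, sortDesc_of_antitone hyanti]
  have eF : eigsDesc (frameOp F₀ + frameOp G) = sortDesc (fun i => x i + y i) := by
    apply eigsDesc_of_diag hU
    rw [xS, yS, diag_conj_add]
    simp
  have hrel : ∀ i : Fin d, (i : ℕ) < s → x i + y i = c := by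
    intro i hi
    have hne : y i ≠ 0 := by
      have := (hsmu i).2 hi
      rwa [eD] at this
    have h1 := hSG
    rw [xS, yS, diag_conj_add, diag_conj_mul hU, diag_conj_smul] at h1
    have h2 : (x i + y i) * y i = c * y i := by
      exact_mod_cast diag_conj_inj hU h1 i
    exact mul_right_cancel₀ hne h2
  rw [eF, eA, eD] at hop
  rw [eA, eD]
  rw [eD] at hsmu
  have hlam : ∀ i : Fin d, (i : ℕ) < s → sortAsc x i = x i :=
    comb_eq x y c hyanti hy0 hsmu hrel hop
  have hsd : s < d := by omega
  have hs0 : 0 < s := by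
    by_contra h
    have hs' : s = 0 := by omega
    have hrank : (frameOp G).rank = 0 := by omega
    have hz : ∀ l, y l = 0 := by
      intro l
      by_contra hl
      have := (hsmu l).1 hl
      omega
    have hd0 : 0 < d := by omega
    have hk0 : 0 < k := by omega
    have hG0 : frameOp G = 0 := by
      rw [yS]; simp [hz]
    have hmaj := (schur_maj hdk a ha_mono G hG U hU hU' y hyanti hy0 yS).2
    rw [max_eq_left hdk] at hmaj
    have h1 : ∑ i, pad y k i = 0 := by
      apply Finset.sum_eq_zero
      intro i _
      unfold pad
      split_ifs <;> simp [hz]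
    have h2 : 0 < ∑ i, pad a k i := by
      have : Nonempty (Fin k) := ⟨⟨0, hk0⟩⟩
      apply Finset.sum_pos
      · intro i _
        simpa [pad] using ha_pos i
      · exact Finset.univ_nonempty
    rw [hmaj, h1] at h2
    exact lt_irrefl _ h2
  have hcle : c ≤ sortAsc x ⟨s, hsd⟩ := by
    by_contra! hlt
    obtain ⟨j, hsj, hxj⟩ := exists_lt_of_sortAsc hsd x c hlt
    have hyj : y j = 0 := by
      by_contra h
      have := (hsmu j).1 h
      omega
    have hcol : ∀ (S : Matrix (Fin d) (Fin d) ℂ) (u : Fin d → ℝ),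
        S = U * Matrix.diagonal (fun l => (u l : ℂ)) * U.conjTranspose →
        S.mulVec (fun r => U r j) = (u j : ℂ) • (fun r => U r j) := by
      intro S u hS
      have h1 : S * U = U * Matrix.diagonal (fun l => (u l : ℂ)) := by
        rw [hS, mul_assoc, hU, mul_one]
      ext r
      have h2 := congrFun (congrFun h1 r) j
      rw [Matrix.mul_apply, Matrix.mul_diagonal] at h2
      simp only [Matrix.mulVec, dotProduct, Pi.smul_apply, smul_eq_mul]
      rw [h2, mul_comm]
    obtain ⟨G', hG', hlt'⟩ := exists_better hdk (frameOp F₀) hP0.1 a ha_pos hf G hG (x j) c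
      (hx0 j) hxj hSG (fun r => U r j) (by
        have := congrFun (congrFun hU j) j
        rw [Matrix.mul_apply, Matrix.one_apply_eq] at this
        simpa [dotProduct] using this) (hcol _ x xS) (by
        rw [hcol _ y yS, hyj]; simp)
    exact absurd (hmin G' hG') (not_le.2 hlt')
  have hform : ∀ i : Fin d, sortAsc x i + y i = if (i : ℕ) < s then c else sortAsc x i := by
    intro i
    split_ifs with hi
    · rw [hlam i hi, hrel i hi]
    · have : y i = 0 := by
        by_contra h
        exact hi ((hsmu i).1 h)
      rw [this, add_zero]
  refine ⟨?_, ?_, hform, ?_, ?_, schur_maj hdk a ha_mono G hG U hU hU' y hyanti hy0 yS⟩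
  · have h1 : s - 1 < d := by omega
    have h2 : s - 1 < s := by omega
    rw [get1, dif_pos h1, hlam ⟨s - 1, h1⟩ h2]
    have h3 := hrel ⟨s - 1, h1⟩ h2
    have h4 : 0 < y ⟨s - 1, h1⟩ := lt_of_le_of_ne (hy0 _) (Ne.symm ((hsmu ⟨s - 1, h1⟩).2 h2))
    linarith
  · have h1 : s + 1 - 1 < d := by omega
    rw [get1, dif_pos h1]
    exact hcle
  · intro i j hij
    have hij' : (i : ℕ) ≤ j := hij
    simp only [hform]
    by_cases hi : (i : ℕ) < s
    · by_cases hj : (j : ℕ) < s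
      · simp [hi, hj]
      · simp only [hi, hj, if_true, if_false]
        exact hcle.trans (sortAsc_monotone x (show (⟨s, hsd⟩ : Fin d) ≤ j from not_lt.1 hj))
    · have hj : ¬ (j : ℕ) < s := by omega
      simp only [hi, hj, if_false]
      exact sortAsc_monotone x hij
  · intro i
    linarith [hy0 i]
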